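/- Let G=(V,E) be a finite simple graph and let k ≥ 2 be an integer with |E| ≥ 2·C(k,2), where C(k,2) is the binomial coefficient. Let k' := 2·C(k,2) + k + 1 and construct the graph G'=(V',E') and partition (A',B') of V' as follows. Start with the vertices V. For each edge e = {x,y} ∈ E add four new vertices u_e, w_e, x_e, y_e and a new vertex v* (added once), with edges {u_e,x}, {u_e,y}, {w_e,x}, {w_e,y}, {w_e,x_e}, {w_e,y_e}, {x_e,v*}. Add a set V_z of |E| − 2·C(k,2) + 1 new vertices, each adjacent to v*. Finally, for each vertex p ∈ {u_e : e ∈ E} ∪ {y_e : e ∈ E}, add a set of 2k'+2 new degree-one vertices adjacent only to p, and for each vertex p ∈ V_z add a set of 2k'+2 new degree-one vertices adjacent only to p. Set B' := {w_e : e ∈ E} ∪ {v*} ∪ V_z ∪ (all degree-one vertices attached to vertices of {u_e : e ∈ E} ∪ {y_e : e ∈ E}), and A' := V'\B'. Then G has a clique of size k if and only if there exists a set S' ⊆ V' with |S'| ≤ k' such that |E'(A' ⊕ S', B' ⊕ S')| > |E'(A',B')|, where E'(X,Y) denotes the set of edges of G' with one endpoint in X and one in Y and ⊕ denotes symmetric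 difference. -/

import Mathlib

open Finset

/-- The vertices of the graph `G'` constructed in the reduction from `Clique`
to `LS Max Cut`: the original vertices, the vertices `u_e, w_e, x_e, y_e` for
every edge `e` (here `Es` is the type of edges of `G`), the vertex `v*`, the
vertices of `V_z` (`zc` many), and the pendant (degree-one) vertices attached
to the `u_e`-, `y_e`- and `z`-vertices (`pc` many each). -/
inductive RedVert (V : Type*) (Es : Type*) (zc pc : ℕ) where
  | orig : V → RedVert V Es zc pc
  | ue : Es → RedVert V Es zc pc
  | we : Es → RedVert V Es zc pc
  | xe : Es → RedVert V Es zc pc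
  | ye : Es → RedVert V Es zc pc
  | star : RedVert V Es zc pc
  | z : Fin zc → RedVert V Es zc pc
  | pu : Es → Fin pc → RedVert V Es zc pc
  | py : Es → Fin pc → RedVert V Es zc pc
  | pz : Fin zc → Fin pc → RedVert V Es zc pc

/-- The edges of the reduction graph `G'` (as a relation, to be symmetrized):
`u_e` and `w_e` are adjacent to both endpoints of `e`; `w_e` is adjacent to
`x_e` and `y_e`; `x_e` is adjacent to `v*`; `v*` is adjacent to all
`z`-vertices; and pendant vertices are attached to the `u_e`-, `y_e`- and
`z`-vertices respectively. Here `mem e v` states that `v` is an endpoint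
of the edge `e`. -/
def redRel {V : Type*} {Es : Type*} {zc pc : ℕ} (mem : Es → V → Prop) :
    RedVert V Es zc pc → RedVert V Es zc pc → Prop
  | .orig v, .ue e => mem e v
  | .orig v, .we e => mem e v
  | .we e, .xe e' => e = e'
  | .we e, .ye e' => e = e'
  | .xe _, .star => True
  | .star, .z _ => True
  | .ue e, .pu e' _ => e = e'
  | .ye e, .py e' _ => e = e'
  | .z i, .pz i' _ => i = i'
  | _, _ => False

/-- The cut of the partition `(X,Y)` in the graph `H`: the set of edges of
`H` with one endpoint in `X` and one endpoint in `Y`. -/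
def cutSet {W : Type*} (H : SimpleGraph W) (X Y : Set W) : Set (Sym2 W) :=
  {e ∈ H.edgeSet | (∃ x ∈ e, x ∈ X) ∧ (∃ y ∈ e, y ∈ Y)}

/-!
Flipping `S` only affects the edges leaving `S`: such an edge joins the cut if it was uncut, and
leaves it if it was cut. Because every `u_e`, `y_e` and `z` has more pendant neighbours than `S` has
vertices, flipping these never pays off. Hence a small `S` gains nothing unless `v* ∈ S`, and then
each edge `e` contributes at most `1` if `w_e`, `x_e` and both ends of `e` lie in `S` (call such an
edge full), at most `-1` if not, and each `z` contributes at most `1`. With `f` full edges the gain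
is thus at most `2 f - |E| + |V_z| = 2 (f - C(k,2)) + 1`, so an improving flip has at least `C(k,2)`
full edges. They use up `2 f + 1` vertices of `S`, which leaves at most `k` original vertices; these
span `C(k,2)` edges and therefore form a clique. Conversely, the bound is attained by flipping a
clique together with `v*` and the vertices `w_e`, `x_e` of its edges.
-/

section Graph

variable {V : Type*} [DecidableEq V] (G : SimpleGraph V) [Fintype G.edgeSet]

lemma edgeFinset_inter_sym2_subset (K : Finset V) :
    G.edgeFinset ∩ K.sym2 ⊆ K.offDiag.image Sym2.mk.uncurry := by
  intro e he
  induction e with | _ x y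
  simp only [mem_inter, SimpleGraph.mem_edgeFinset, SimpleGraph.mem_edgeSet, mk_mem_sym2_iff] at he
  exact mem_image.2 ⟨(x, y), mem_offDiag.2 ⟨he.2.1, he.2.2, he.1.ne⟩, rfl⟩

lemma card_edgeFinset_inter_sym2_le (K : Finset V) :
    #(G.edgeFinset ∩ K.sym2) ≤ (#K).choose 2 :=
  (card_le_card (edgeFinset_inter_sym2_subset G K)).trans_eq (Sym2.card_image_offDiag K)

lemma isClique_iff_card_edgeFinset_inter_sym2 (K : Finset V) :
    G.IsClique K ↔ #(G.edgeFinset ∩ K.sym2) = (#K).choose 2 := by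
  rw [← Sym2.card_image_offDiag]
  have hsub := edgeFinset_inter_sym2_subset G K
  constructor
  · refine fun hK => congrArg card (hsub.antisymm fun e he => ?_)
    obtain ⟨⟨x, y⟩, hxy, rfl⟩ := mem_image.1 he
    obtain ⟨hx, hy, hne⟩ := mem_offDiag.1 hxy
    simpa [hx, hy] using hK hx hy hne
  · intro hcard x hx y hy hne
    have hmem : s(x, y) ∈ K.offDiag.image Sym2.mk.uncurry :=
      mem_image.2 ⟨(x, y), mem_offDiag.2 ⟨hx, hy, hne⟩, rfl⟩
    rw [← eq_of_subset_of_card_le hsub hcard.ge] at hmem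
    simpa using (mem_inter.1 hmem).1

lemma isNClique_of_choose_two_le {k : ℕ} (hk : 2 ≤ k) {K : Finset V} (hK : #K ≤ k)
    (h : k.choose 2 ≤ #(G.edgeFinset ∩ K.sym2)) : G.IsNClique k K := by
  have hle := card_edgeFinset_inter_sym2_le G K
  have hcard : #K = k := by
    refine hK.eq_of_not_lt fun hlt => ?_
    obtain ⟨m, rfl⟩ : ∃ m, k = m + 1 := ⟨k - 1, by omega⟩
    have hchoose : (#K).choose 2 ≤ m.choose 2 := Nat.choose_le_choose 2 (Nat.le_of_lt_succ hlt)
    have hsucc : (m + 1).choose 2 = m.choose 1 + m.choose 2 := Nat.choose_succ_succ m 1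
    rw [Nat.choose_one_right] at hsucc
    omega
  refine ⟨(isClique_iff_card_edgeFinset_inter_sym2 G K).2 (hle.antisymm ?_), hcard⟩
  rwa [hcard]

lemma card_filter_edgeSet_mem_sym2 (K : Finset V) :
    #{e : G.edgeSet | (e : Sym2 V) ∈ K.sym2} = #(G.edgeFinset ∩ K.sym2) := by
  rw [← card_map (Function.Embedding.subtype _)]
  congr 1
  ext e
  simp [and_comm]

end Graph

section Cut

variable {W : Type*}

open Classical in
/-- The indicator that `S` separates `a` from `b`, that is, contains exactly one of them. It is
integer-valued because the change of a cut under a flip is a signed sum of such indicators. -/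
noncomputable def sep (S : Set W) (a b : W) : ℤ :=
  if (a ∈ S ↔ b ∈ S) then 0 else 1

lemma sep_nonneg (S : Set W) (a b : W) : 0 ≤ sep S a b := by
  unfold sep
  split_ifs <;> simp

lemma sep_symmDiff (B S : Set W) (a b : W) :
    sep (symmDiff B S) a b = sep B a b + (1 - 2 * sep B a b) * sep S a b := by
  by_cases a ∈ B <;> by_cases b ∈ B <;> by_cases a ∈ S <;> by_cases b ∈ S <;>
    simp [sep, Set.mem_symmDiff, *]

lemma sep_le_indicator_add_indicator (S : Set W) (a b : W) :
    sep S a b ≤ S.indicator 1 a + S.indicator 1 b := by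
  by_cases a ∈ S <;> by_cases b ∈ S <;> simp [sep, *]

lemma indicator_le_sep_add_indicator (S : Set W) (a b : W) :
    S.indicator 1 a ≤ sep S a b + S.indicator 1 b := by
  by_cases a ∈ S <;> by_cases b ∈ S <;> simp [sep, *]

open Classical in
lemma sum_indicator_one_eq_ncard [Fintype W] (S : Set W) :
    ∑ a, S.indicator (1 : W → ℕ) a = S.ncard := by
  simp [Set.indicator_apply, Set.ncard_eq_toFinset_card']

lemma mul_indicator_le_sum_sep {ι : Type*} [Fintype ι] {S : Set W} (hS : S.Finite) (p : W)
    {q : ι → W} (hq : Function.Injective q) {m : ℕ} (hm : S.ncard + m ≤ Fintype.card ι) :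
    m * S.indicator 1 p ≤ ∑ j, sep S p (q j) := by
  classical
  by_cases hp : p ∈ S
  · have hmem : #{j | q j ∈ S} ≤ S.ncard := by
      rw [← card_image_of_injective _ hq, ← Set.ncard_coe_finset]
      exact Set.ncard_le_ncard (by simp [Set.subset_def]) hS
    have hcompl : #{j | q j ∈ S} + #{j | q j ∉ S} = Fintype.card ι :=
      card_filter_add_card_filter_not _
    have hsum : ∑ j, sep S p (q j) = #{j | q j ∉ S} := by
      simp [sep, hp, ← sum_boole, ite_not]
    simp only [hp, Set.indicator_of_mem, Pi.one_apply, hsum]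
    omega
  · simpa [hp] using sum_nonneg fun j _ => sep_nonneg S p (q j)

lemma sum_sep_le_sum_indicator_add_sum_sep {ι κ : Type*} [Fintype ι] {S : Set W} (hS : S.Finite)
    (p : W) {q : ι → W} (hq : Function.Injective q) (T : Finset κ) (f : κ → W)
    (hT : S.ncard + #T ≤ Fintype.card ι) :
    ∑ v ∈ T, sep S (f v) p ≤ ∑ v ∈ T, S.indicator 1 (f v) + ∑ j, sep S p (q j) :=
  calc ∑ v ∈ T, sep S (f v) p
    _ ≤ ∑ v ∈ T, (S.indicator 1 (f v) + S.indicator 1 p) :=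
      sum_le_sum fun v _ => sep_le_indicator_add_indicator S (f v) p
    _ = ∑ v ∈ T, S.indicator 1 (f v) + #T * S.indicator 1 p := by
      simp [sum_add_distrib]
    _ ≤ ∑ v ∈ T, S.indicator 1 (f v) + ∑ j, sep S p (q j) := by
      gcongr
      exact mul_indicator_le_sum_sep hS p hq hT

lemma indicator_le_sep_add_sum_sep {ι : Type*} [Fintype ι] {S : Set W} (hS : S.Finite)
    (a p : W) {q : ι → W} (hq : Function.Injective q) (hι : S.ncard < Fintype.card ι) :
    S.indicator 1 a ≤ sep S a p + ∑ j, sep S p (q j) := by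
  have hpendant : S.indicator 1 p ≤ ∑ j, sep S p (q j) := by
    simpa using mul_indicator_le_sum_sep hS p hq (m := 1) hι
  exact (indicator_le_sep_add_indicator S a p).trans (by gcongr)

open Classical in
lemma sum_indicator_sub_sum_sep_le (S : Set W) (x y w t s : W) :
    S.indicator 1 x + S.indicator 1 y - sep S x w - sep S y w - S.indicator 1 w - sep S w t -
        sep S t s ≤
      if s ∈ S then (if w ∈ S ∧ t ∈ S ∧ x ∈ S ∧ y ∈ S then 1 else -1) else 0 := by
  by_cases x ∈ S <;> by_cases y ∈ S <;> by_cases w ∈ S <;> by_cases t ∈ S <;> by_cases s ∈ S <;>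
    simp [sep, *]

lemma mk_mem_cutSet_compl (H : SimpleGraph W) (X : Set W) (x y : W) :
    s(x, y) ∈ cutSet H Xᶜ X ↔ H.Adj x y ∧ ¬ (x ∈ X ↔ y ∈ X) := by
  simp only [cutSet, Set.mem_ofPred_eq, SimpleGraph.mem_edgeSet, Sym2.mem_iff, exists_eq_or_imp,
    exists_eq_left, Set.mem_compl_iff]
  tauto

open Classical in
lemma ncard_cutSet_fromRel [Fintype W] (R : W → W → Prop) [Std.Asymm R] (X : Set W) :
    ((cutSet (SimpleGraph.fromRel R) Xᶜ X).ncard : ℤ) =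
      ∑ a, ∑ b, if R a b then sep X a b else 0 := by
  let D : Finset (W × W) := {p | R p.1 p.2 ∧ ¬ (p.1 ∈ X ↔ p.2 ∈ X)}
  have hcut : cutSet (SimpleGraph.fromRel R) Xᶜ X = Sym2.mk.uncurry '' (D : Set (W × W)) := by
    ext e
    induction e with | _ x y
    simp only [mk_mem_cutSet_compl, SimpleGraph.fromRel_adj, D, coe_filter, mem_univ, true_and,
      Set.mem_image, Set.mem_ofPred_eq, Prod.exists, Function.uncurry_apply_pair, Sym2.eq_iff]
    grind
  have hinj : Set.InjOn Sym2.mk.uncurry (D : Set (W × W)) := by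
    rintro ⟨a, b⟩ hab ⟨c, d⟩ hcd h
    rcases Sym2.eq_iff.1 h with ⟨rfl, rfl⟩ | ⟨rfl, rfl⟩
    · rfl
    · have hab : R a b := by simp_all [D]
      have hba : R b a := by simp_all [D]
      exact absurd hba (asymm_of R hab)
  rw [hcut, hinj.ncard_image, Set.ncard_coe_finset, card_filter, Fintype.sum_prod_type]
  push_cast
  simp only [sep, ite_and, ite_not]

open Classical in
lemma ncard_cutSet_symmDiff_sub [Fintype W] (R : W → W → Prop) [Std.Asymm R] (B S : Set W) :
    ((cutSet (SimpleGraph.fromRel R) (symmDiff Bᶜ S) (symmDiff B S)).ncard : ℤ) -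
        (cutSet (SimpleGraph.fromRel R) Bᶜ B).ncard =
      ∑ a, ∑ b, if R a b then (1 - 2 * sep B a b) * sep S a b else 0 := by
  have hcompl : symmDiff Bᶜ S = (symmDiff B S)ᶜ := by
    simp only [← hnot_eq_compl, ← symmDiff_top, symmDiff_right_comm]
  rw [hcompl, ncard_cutSet_fromRel, ncard_cutSet_fromRel]
  simp only [← sum_sub_distrib, sep_symmDiff]
  refine sum_congr rfl fun a _ => sum_congr rfl fun b _ => ?_
  split_ifs <;> ring

end Cut

namespace RedVert

section Sum

variable {V Es : Type*} {zc pc : ℕ}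

/-- The ten families of vertices of the reduction graph, as a sum type; it provides the `Fintype`
structure and splits sums over all vertices. -/
def equivSum (V Es : Type*) (zc pc : ℕ) : RedVert V Es zc pc ≃
    V ⊕ Es ⊕ Es ⊕ Es ⊕ Es ⊕ Unit ⊕ Fin zc ⊕ (Es × Fin pc) ⊕ (Es × Fin pc) ⊕ (Fin zc × Fin pc) where
  toFun
    | orig v => .inl v
    | ue e => .inr (.inl e)
    | we e => .inr (.inr (.inl e))
    | xe e => .inr (.inr (.inr (.inl e)))
    | ye e => .inr (.inr (.inr (.inr (.inl e))))
    | star => .inr (.inr (.inr (.inr (.inr (.inl ())))))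
    | z i => .inr (.inr (.inr (.inr (.inr (.inr (.inl i))))))
    | pu e j => .inr (.inr (.inr (.inr (.inr (.inr (.inr (.inl (e, j))))))))
    | py e j => .inr (.inr (.inr (.inr (.inr (.inr (.inr (.inr (.inl (e, j)))))))))
    | pz i j => .inr (.inr (.inr (.inr (.inr (.inr (.inr (.inr (.inr (i, j)))))))))
  invFun := Sum.elim orig <| Sum.elim ue <| Sum.elim we <| Sum.elim xe <| Sum.elim ye <|
    Sum.elim (fun _ => star) <| Sum.elim z <| Sum.elim pu.uncurry <| Sum.elim py.uncurry pz.uncurry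
  left_inv a := by cases a <;> rfl
  right_inv a := by rcases a with a | a | a | a | a | a | a | a | a | a <;> rfl

variable [Fintype V] [Fintype Es]

instance : Fintype (RedVert V Es zc pc) :=
  Fintype.ofEquiv _ (equivSum V Es zc pc).symm

lemma sum_univ {M : Type*} [AddCommMonoid M] (f : RedVert V Es zc pc → M) :
    ∑ a, f a = ∑ v, f (orig v) + ∑ e, f (ue e) + ∑ e, f (we e) + ∑ e, f (xe e) + ∑ e, f (ye e) +
      f star + ∑ i, f (z i) + ∑ e, ∑ j, f (pu e j) + ∑ e, ∑ j, f (py e j) +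
      ∑ i, ∑ j, f (pz i j) := by
  rw [← (equivSum V Es zc pc).symm.sum_comp f]
  simp [Fintype.sum_sum_type, Fintype.sum_prod_type, equivSum, add_assoc]

end Sum

variable {V Es : Type*} {zc pc : ℕ}

/-- The side `B'` of the initial partition. -/
def sideB (V Es : Type*) (zc pc : ℕ) : Set (RedVert V Es zc pc) :=
  Set.range we ∪ {star} ∪ Set.range z ∪ Set.range pu.uncurry ∪ Set.range py.uncurry

instance (mem : Es → V → Prop) : Std.Asymm (redRel (zc := zc) (pc := pc) mem) :=
  ⟨fun a b => by cases a <;> cases b <;> simp [redRel]⟩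

/-- The number of cut edges gained at `z i` when `S` is flipped: `{v*, z i}` is initially uncut,
the pendant edges at `z i` are initially cut. -/
noncomputable def zGain (S : Set (RedVert V Es zc pc)) (i : Fin zc) : ℤ :=
  sep S star (z i) - ∑ j, sep S (z i) (pz i j)

lemma zGain_le {S : Set (RedVert V Es zc pc)} (hS : S.Finite) (hpc : S.ncard < pc) (i : Fin zc) :
    zGain S i ≤ S.indicator 1 star := by
  have hz := sum_sep_le_sum_indicator_add_sum_sep hS (z i) (q := pz i)
    (fun _ _ h => by injection h) {star} id (by simpa)
  simp only [sum_singleton, id] at hz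
  unfold zGain
  linarith

variable (ends : Es → Sym2 V)

/-- The edge `e` is full in `S` if `S` contains `w_e`, `x_e` and both endpoints of `e`; these are
the edges whose gadgets gain when `S` is flipped. -/
def IsFull (S : Set (RedVert V Es zc pc)) (e : Es) : Prop :=
  we e ∈ S ∧ xe e ∈ S ∧ ∀ v ∈ ends e, orig v ∈ S

open Classical in
lemma card_orig_add_two_mul_card_isFull_lt_ncard [Fintype V] [Fintype Es]
    {S : Set (RedVert V Es zc pc)} (hstar : star ∈ S) :
    #{v | orig v ∈ S} + 2 * #{e | IsFull ends S e} < S.ncard := by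
  have hcard (f : Es → RedVert V Es zc pc) : ∑ e, S.indicator 1 (f e) = #{e | f e ∈ S} := by
    simp [Set.indicator_apply]
  have horig : ∑ v, S.indicator 1 (orig v) = #{v | orig v ∈ S} := by
    simp [Set.indicator_apply]
  have hwe : #{e | IsFull ends S e} ≤ #{e | we e ∈ S} :=
    card_le_card (monotone_filter_right _ fun _ _ he => he.1)
  have hxe : #{e | IsFull ends S e} ≤ #{e | xe e ∈ S} :=
    card_le_card (monotone_filter_right _ fun _ _ he => he.2.1)
  rw [← sum_indicator_one_eq_ncard, sum_univ, horig, hcard we, hcard xe,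
    Set.indicator_of_mem hstar, Pi.one_apply]
  omega

variable [DecidableEq V]

/-- The number of cut edges gained in the gadget of the edge `e`, whose pair of endpoints is
`ends e`, when `S` is flipped. Only the edges from `u_e` to the endpoints are initially uncut. -/
noncomputable def edgeGain (S : Set (RedVert V Es zc pc)) (e : Es) : ℤ :=
  ∑ v ∈ (ends e).toFinset, (sep S (orig v) (ue e) - sep S (orig v) (we e)) -
    sep S (we e) (xe e) - sep S (we e) (ye e) - sep S (xe e) star -
    ∑ j, sep S (ue e) (pu e j) - ∑ j, sep S (ye e) (py e j)

open Classical in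
lemma sum_redRel [Fintype V] [Fintype Es] {M : Type*} [AddCommMonoid M]
    (f : RedVert V Es zc pc → RedVert V Es zc pc → M) :
    ∑ a, ∑ b, (if redRel (fun e v => v ∈ ends e) a b then f a b else 0) =
      ∑ e, (∑ v ∈ (ends e).toFinset, (f (orig v) (ue e) + f (orig v) (we e)) +
        f (we e) (xe e) + f (we e) (ye e) + f (xe e) star +
        ∑ j, f (ue e) (pu e j) + ∑ j, f (ye e) (py e j)) +
      ∑ i, (f star (z i) + ∑ j, f (z i) (pz i j)) := by
  have hends (g : V → Es → M) : ∑ v, ∑ e, (if v ∈ ends e then g v e else 0) =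
      ∑ e, ∑ v ∈ (ends e).toFinset, g v e := by
    rw [sum_comm]
    refine sum_congr rfl fun e _ => ?_
    rw [← sum_filter]
    congr 1
    ext v
    simp
  -- Sums over propositions carry no decidability instances, which would keep the folded `redRel`.
  simp_rw [← finsum_eq_if]
  simp only [sum_univ, redRel]
  simp only [finsum_eq_if, ↓reduceIte, sum_const_zero, zero_add, add_zero, sum_add_distrib, hends,
    sum_ite_irrel, sum_ite_eq, mem_univ]
  abel

lemma ncard_cutSet_sideB_lt_symmDiff_iff [Finite V] [Fintype Es] (S : Set (RedVert V Es zc pc)) :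
    (cutSet (SimpleGraph.fromRel (redRel fun e v => v ∈ ends e))
        (sideB V Es zc pc)ᶜ (sideB V Es zc pc)).ncard <
      (cutSet (SimpleGraph.fromRel (redRel fun e v => v ∈ ends e))
        (symmDiff (sideB V Es zc pc)ᶜ S) (symmDiff (sideB V Es zc pc) S)).ncard ↔
      0 < ∑ e, edgeGain ends S e + ∑ i, zGain S i := by
  classical
  have := Fintype.ofFinite V
  have hsign (a b : RedVert V Es zc pc) : 1 - 2 * sep (sideB V Es zc pc) a b =
      if (a ∈ sideB V Es zc pc ↔ b ∈ sideB V Es zc pc) then 1 else -1 := by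
    unfold sep
    split_ifs <;> rfl
  rw [← Nat.cast_lt (α := ℤ), ← sub_pos, ncard_cutSet_symmDiff_sub, sum_redRel]
  simp only [hsign]
  simp [sideB, edgeGain, zGain, sub_eq_add_neg]

lemma edgeGain_of_ends_eq {S : Set (RedVert V Es zc pc)} {e : Es} {x y : V} (he : ends e = s(x, y))
    (hxy : x ≠ y) :
    edgeGain ends S e =
      sep S (orig x) (ue e) + sep S (orig y) (ue e) - sep S (orig x) (we e) -
        sep S (orig y) (we e) - sep S (we e) (xe e) - sep S (we e) (ye e) - sep S (xe e) star -
        ∑ j, sep S (ue e) (pu e j) - ∑ j, sep S (ye e) (py e j) := by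
  simp only [edgeGain, he, Sym2.toFinset_mk_eq, sum_pair hxy]
  ring

open Classical in
lemma edgeGain_le {ends : Es → Sym2 V} {S : Set (RedVert V Es zc pc)} (hS : S.Finite)
    (hpc : S.ncard + 2 ≤ pc) {e : Es} (he : ¬ (ends e).IsDiag) :
    edgeGain ends S e ≤ if star ∈ S then (if IsFull ends S e then 1 else -1) else 0 := by
  obtain ⟨x, y, hxy⟩ := Sym2.exists.1 ⟨ends e, rfl⟩
  have hne : x ≠ y := by simpa [hxy] using he
  have hu := sum_sep_le_sum_indicator_add_sum_sep hS (ue e) (q := pu e)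
    (fun _ _ h => by injection h) {x, y} orig (by simpa [card_pair hne])
  have hy := indicator_le_sep_add_sum_sep hS (we e) (ye e) (q := py e)
    (fun _ _ h => by injection h) (by simp; omega)
  have hcore := sum_indicator_sub_sum_sep_le S (orig x) (orig y) (we e) (xe e) star
  have hfull : IsFull ends S e ↔ we e ∈ S ∧ xe e ∈ S ∧ orig x ∈ S ∧ orig y ∈ S := by
    simp [IsFull, hxy]
  rw [sum_pair hne, sum_pair hne] at hu
  rw [edgeGain_of_ends_eq ends hxy hne]
  simp only [hfull]
  linarith

open Classical in
lemma sum_gain_le [Fintype Es] {ends : Es → Sym2 V} {S : Set (RedVert V Es zc pc)} (hS : S.Finite)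
    (hpc : S.ncard + 2 ≤ pc) (hends : ∀ e, ¬ (ends e).IsDiag) :
    ∑ e, edgeGain ends S e + ∑ i, zGain S i ≤
      if star ∈ S then 2 * (#{e | IsFull ends S e} : ℤ) - Fintype.card Es + zc else 0 := by
  have hedge := sum_le_sum fun e (_ : e ∈ univ) => edgeGain_le hS hpc (hends e)
  have hz := sum_le_sum fun i (_ : i ∈ univ) => zGain_le hS (by omega) i
  have hcard : (#{e | IsFull ends S e} : ℤ) + #{e | ¬ IsFull ends S e} = Fintype.card Es := by
    exact_mod_cast card_filter_add_card_filter_not (s := univ) _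
  by_cases hstar : star ∈ S
  · simp only [hstar, if_true, sum_ite, sum_const, nsmul_eq_mul, mul_one, mul_neg,
      Set.indicator_of_mem, Pi.one_apply, card_univ, Fintype.card_fin] at hedge hz ⊢
    linarith
  · simp only [hstar, if_false, not_false_eq_true, Set.indicator_of_notMem, sum_const_zero]
      at hedge hz ⊢
    linarith

lemma exists_card_lt_of_sum_gain_pos [Finite V] [Fintype Es] {ends : Es → Sym2 V}
    {S : Set (RedVert V Es zc pc)} (hpc : S.ncard + 2 ≤ pc) (hends : ∀ e, ¬ (ends e).IsDiag)
    (hpos : 0 < ∑ e, edgeGain ends S e + ∑ i, zGain S i) :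
    ∃ (K : Finset V) (F : Finset Es), (∀ e ∈ F, ends e ∈ K.sym2) ∧
      Fintype.card Es < 2 * #F + zc ∧ #K + 2 * #F < S.ncard := by
  classical
  have := Fintype.ofFinite V
  have hle := hpos.trans_le (sum_gain_le S.toFinite hpc hends)
  have hstar : star ∈ S := by
    by_contra hstar
    simp [hstar] at hle
  rw [if_pos hstar] at hle
  refine ⟨({v | orig v ∈ S} : Finset V), ({e | IsFull ends S e} : Finset Es), fun e he => ?_,
    by omega, card_orig_add_two_mul_card_isFull_lt_ncard ends hstar⟩
  simpa using (mem_filter.1 he).2.2.2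

/-- The improving flip made from a clique `K`: `K` itself, `v*`, and `w_e`, `x_e` for each edge `e`
with both endpoints in `K`. -/
def spanFlip (K : Finset V) : Set (RedVert V Es zc pc) :=
  {a | match a with
       | orig v => v ∈ K
       | we e => ends e ∈ K.sym2
       | xe e => ends e ∈ K.sym2
       | star => True
       | _ => False}

lemma ncard_spanFlip [Finite V] [Fintype Es] (K : Finset V) :
    (spanFlip (zc := zc) (pc := pc) ends K).ncard = #K + 2 * #{e | ends e ∈ K.sym2} + 1 := by
  classical
  have := Fintype.ofFinite V
  rw [← sum_indicator_one_eq_ncard, sum_univ]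
  simp only [spanFlip, Set.indicator_apply, Set.mem_ofPred_eq]
  simp only [Pi.one_apply, sum_boole, if_true, if_false, sum_const_zero, add_zero,
    filter_mem_eq_inter, univ_inter, Nat.cast_id]
  ring

lemma sum_gain_spanFlip [Fintype Es] (hends : ∀ e, ¬ (ends e).IsDiag) (K : Finset V) :
    ∑ e, edgeGain ends (spanFlip (zc := zc) (pc := pc) ends K) e +
        ∑ i, zGain (spanFlip (zc := zc) (pc := pc) ends K) i =
      2 * #{e | ends e ∈ K.sym2} - Fintype.card Es + zc := by
  have hedge (e : Es) : edgeGain ends (spanFlip (zc := zc) (pc := pc) ends K) e =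
      2 * (if ends e ∈ K.sym2 then 1 else 0) - 1 := by
    obtain ⟨x, y, hxy⟩ := Sym2.exists.1 ⟨ends e, rfl⟩
    have hne : x ≠ y := by simpa [hxy] using hends e
    rw [edgeGain_of_ends_eq ends hxy hne]
    by_cases x ∈ K <;> by_cases y ∈ K <;> simp [sep, spanFlip, *]
  have hz (i : Fin zc) : zGain (spanFlip (zc := zc) (pc := pc) ends K) i = 1 := by
    simp [zGain, sep, spanFlip]
  simp only [hedge, hz, sum_sub_distrib, ← mul_sum, sum_boole]
  simp

end RedVert

/-- W[1]-hardness reduction from `Clique` to `LS Max Cut` with unit weights: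
for `k ≥ 2` and `|E| ≥ 2·binom(k,2)`, the graph `G` has a clique of size `k`
iff for the constructed graph `G'` with partition `(A',B')` there is a set
`S'` of at most `k' = 2·binom(k,2) + k + 1` vertices whose flip yields a
partition with strictly more cut edges. -/
theorem clique_iff_improving_flip
    {V : Type*} [Fintype V] [DecidableEq V]
    (G : SimpleGraph V) [DecidableRel G.Adj]
    (k : ℕ) (hk : 2 ≤ k) (hE : 2 * Nat.choose k 2 ≤ G.edgeFinset.card) :
    let k' := 2 * Nat.choose k 2 + k + 1
    let zc := G.edgeFinset.card - 2 * Nat.choose k 2 + 1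
    let pc := 2 * k' + 2
    let G' : SimpleGraph (RedVert V (↥G.edgeSet) zc pc) :=
      SimpleGraph.fromRel (redRel fun e v => v ∈ (e : Sym2 V))
    let B' : Set (RedVert V (↥G.edgeSet) zc pc) :=
      {a | match a with
           | .we _ => True | .star => True | .z _ => True
           | .pu _ _ => True | .py _ _ => True | _ => False}
    let A' : Set (RedVert V (↥G.edgeSet) zc pc) := B'ᶜ
    ((∃ S : Finset V, G.IsNClique k S) ↔
      ∃ S' : Set (RedVert V (↥G.edgeSet) zc pc), S'.ncard ≤ k' ∧
        (cutSet G' A' B').ncard <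
          (cutSet G' (symmDiff A' S') (symmDiff B' S')).ncard) := by
  intro k' zc pc G' B' A'
  classical
  have hends (e : G.edgeSet) : ¬ (e : Sym2 V).IsDiag := G.not_isDiag_of_mem_edgeSet e.2
  have hcard : Fintype.card G.edgeSet = #G.edgeFinset := G.edgeFinset_card.symm
  have hB : B' = RedVert.sideB V G.edgeSet zc pc := by
    ext a
    cases a <;> simp [B', RedVert.sideB]
  simp only [A', hB, G', RedVert.ncard_cutSet_sideB_lt_symmDiff_iff (Subtype.val : G.edgeSet → _)]
  constructor
  · rintro ⟨K, hK⟩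
    have hspan : #{e : G.edgeSet | (e : Sym2 V) ∈ K.sym2} = k.choose 2 := by
      rw [card_filter_edgeSet_mem_sym2, ← hK.card_eq]
      exact (isClique_iff_card_edgeFinset_inter_sym2 G K).1 hK.isClique
    refine ⟨RedVert.spanFlip Subtype.val K, ?_, ?_⟩
    · rw [RedVert.ncard_spanFlip, hspan, hK.card_eq]
      omega
    · rw [RedVert.sum_gain_spanFlip _ hends, hspan]
      omega
  · rintro ⟨S, hS, hpos⟩
    obtain ⟨K, F, hFK, hF, hKF⟩ := RedVert.exists_card_lt_of_sum_gain_pos (by omega) hends hpos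
    have hspan : #F ≤ #{e : G.edgeSet | (e : Sym2 V) ∈ K.sym2} :=
      card_le_card fun e he => by simpa using hFK e he
    rw [card_filter_edgeSet_mem_sym2] at hspan
    exact ⟨K, isNClique_of_choose_two_le G hk (by omega) (by omega)⟩
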